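/- arXiv:2109.07777 — 2 statements merged into one kernel-verified Lean document; each statement's English description precedes it below -/
import Mathlib

section
/- Let 0 < φ ≤ π/2 and q = cot φ ≥ 0. The 4×4 matrix S = (1/(1+q))·[[q,0,0,1],[0,q,1,0],[1,0,q,0],[0,1,0,q]] is a stochastic matrix and satisfies ∂₁ ∘ S = (√(1+q²)/(1+q))·R_φ ∘ ∂₁ as linear maps from ℝ⁴ to ℝ², where R_φ = [[cos φ, −sin φ],[sin φ, cos φ]] is the rotation matrix by angle φ. (Stochastic emulation of the rotation gate on the ReIm grabit.) -/
/-!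
`S_rot q` is a convex combination, with weights `q / (1 + q)` and `1 / (1 + q)`, of the identity
and of a cyclic permutation of the four outcomes. The map `∂₁` turns this permutation into the
quarter turn of the plane, so `∂₁ ∘ S_rot q = (1 + q)⁻¹ • (q • 1 + Rot (π / 2)) ∘ ∂₁`. For
`q = cot φ` the sum is `(cos φ • 1 + sin φ • Rot (π / 2)) / sin φ = Rot φ / sin φ`, where
`1 / sin φ = √(1 + q ^ 2)`.
-/

open scoped BigOperators Matrix

/-- The single-grabit difference map `∂₁ : ℝ⁴ → ℝ²`,
`P = (P₀,P₁,P₂,P₃) ↦ (P₀ − P₁, P₂ − P₃)`. -/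
def del1 (P : Fin 4 → ℝ) : Fin 2 → ℝ := ![P 0 - P 1, P 2 - P 3]

/-- A stochastic matrix: nonnegative entries, each column sums to 1. -/
def IsStochastic {α : Type*} [Fintype α] (S : Matrix α α ℝ) : Prop :=
  (∀ i j, 0 ≤ S i j) ∧ ∀ j, ∑ i, S i j = 1

/-- The stochastic map emulating the rotation gate, for amplitude ratio `q`. -/
noncomputable def S_rot (q : ℝ) : Matrix (Fin 4) (Fin 4) ℝ :=
  (1 / (1 + q)) • !![q, 0, 0, 1; 0, q, 1, 0; 1, 0, q, 0; 0, 1, 0, q]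

/-- The rotation matrix by angle `φ`. -/
noncomputable def Rot (φ : ℝ) : Matrix (Fin 2) (Fin 2) ℝ :=
  !![Real.cos φ, -Real.sin φ; Real.sin φ, Real.cos φ]

lemma isStochastic_iff_mem_colStochastic {α : Type*} [Fintype α] [DecidableEq α]
    {S : Matrix α α ℝ} : IsStochastic S ↔ S ∈ Matrix.colStochastic ℝ α :=
  Matrix.mem_colStochastic_iff_sum.symm

/-- The cycle `0 ↦ 3 ↦ 1 ↦ 2 ↦ 0` of the four outcomes of a grabit, whose permutation matrix
emulates the rotation `Rot (π / 2)`. That matrix acts by `P ↦ P ∘ quarterTurn`, so it moves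
probability along the inverse cycle. -/
def quarterTurn : Equiv.Perm (Fin 4) where
  toFun := ![3, 2, 0, 1]
  invFun := ![2, 3, 1, 0]
  left_inv := by decide
  right_inv := by decide

lemma S_rot_eq_smul_add_permMatrix (q : ℝ) :
    S_rot q = (1 / (1 + q)) • (q • 1 + quarterTurn.permMatrix ℝ) := by
  rw [S_rot]
  congr 1
  ext i j
  fin_cases i <;> fin_cases j <;> simp [quarterTurn, Equiv.toPEquiv_apply]

lemma isStochastic_S_rot {q : ℝ} (hq : 0 ≤ q) : IsStochastic (S_rot q) := by
  have weights_sum : q / (1 + q) + 1 / (1 + q) = 1 := by field_simp; ring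
  have convex_combination : S_rot q =
      (q / (1 + q)) • 1 + (1 / (1 + q)) • quarterTurn.permMatrix ℝ := by
    rw [S_rot_eq_smul_add_permMatrix, smul_add, smul_smul, one_div_mul_eq_div]
  rw [isStochastic_iff_mem_colStochastic, convex_combination]
  exact Matrix.convex_colStochastic (one_mem _) Matrix.permMatrix_mem_colStochastic
    (by positivity) (by positivity) weights_sum

lemma del1_add (P Q : Fin 4 → ℝ) : del1 (P + Q) = del1 P + del1 Q := by
  simp [del1, add_sub_add_comm]

lemma del1_smul (c : ℝ) (P : Fin 4 → ℝ) : del1 (c • P) = c • del1 P := by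
  simp [del1, mul_sub]

lemma del1_permMatrix_quarterTurn_mulVec (P : Fin 4 → ℝ) :
    del1 (quarterTurn.permMatrix ℝ *ᵥ P) = Rot (Real.pi / 2) *ᵥ del1 P := by
  rw [Matrix.permMatrix_mulVec]
  ext i
  fin_cases i <;> simp [del1, Rot, quarterTurn, Matrix.mulVec, dotProduct, Fin.sum_univ_two]

lemma del1_S_rot_mulVec (q : ℝ) (P : Fin 4 → ℝ) :
    del1 (S_rot q *ᵥ P) = (1 / (1 + q)) • (q • 1 + Rot (Real.pi / 2)) *ᵥ del1 P := by
  calc del1 (S_rot q *ᵥ P)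
      = del1 ((1 / (1 + q)) • (q • P + quarterTurn.permMatrix ℝ *ᵥ P)) := by
        rw [S_rot_eq_smul_add_permMatrix, Matrix.smul_mulVec, Matrix.add_mulVec,
          Matrix.smul_mulVec, Matrix.one_mulVec]
    _ = (1 / (1 + q)) • (q • del1 P + Rot (Real.pi / 2) *ᵥ del1 P) := by
        rw [del1_smul, del1_add, del1_smul, del1_permMatrix_quarterTurn_mulVec]
    _ = (1 / (1 + q)) • (q • 1 + Rot (Real.pi / 2)) *ᵥ del1 P := by
        rw [Matrix.add_mulVec, Matrix.smul_mulVec, Matrix.one_mulVec]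

lemma inv_sqrt_one_add_cot_sq {φ : ℝ} (hφ : 0 < Real.sin φ) :
    (√(1 + Real.cot φ ^ 2))⁻¹ = Real.sin φ := by
  have hcos : 0 < Real.cos (Real.pi / 2 - φ) := by rwa [Real.cos_pi_div_two_sub]
  rw [← Real.cos_pi_div_two_sub, ← Real.inv_sqrt_one_add_tan_sq hcos, Real.tan_pi_div_two_sub,
    Real.tan_inv_eq_cot]

lemma sqrt_one_add_cot_sq_smul_Rot {φ : ℝ} (hφ : 0 < Real.sin φ) :
    √(1 + Real.cot φ ^ 2) • Rot φ = Real.cot φ • 1 + Rot (Real.pi / 2) := by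
  have sqrt_eq : √(1 + Real.cot φ ^ 2) = (Real.sin φ)⁻¹ := by
    rw [← inv_sqrt_one_add_cot_sq hφ, inv_inv]
  have mul_cos : (Real.sin φ)⁻¹ * Real.cos φ = Real.cot φ := by
    rw [Real.cot_eq_cos_div_sin, inv_mul_eq_div]
  rw [sqrt_eq]
  ext i j
  fin_cases i <;> fin_cases j <;> simp [Rot, mul_cos, hφ.ne']

lemma del1_S_rot_cot_mulVec {φ : ℝ} (hφ : 0 < Real.sin φ) (P : Fin 4 → ℝ) :
    del1 (S_rot (Real.cot φ) *ᵥ P) =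
      (√(1 + Real.cot φ ^ 2) / (1 + Real.cot φ)) • Rot φ *ᵥ del1 P := by
  rw [del1_S_rot_mulVec, ← sqrt_one_add_cot_sq_smul_Rot hφ, Matrix.smul_mulVec, smul_smul,
    one_div_mul_eq_div]

lemma cot_nonneg_of_nonneg_of_le_pi_div_two {φ : ℝ} (hφ₀ : 0 ≤ φ) (hφ₁ : φ ≤ Real.pi / 2) :
    0 ≤ Real.cot φ := by
  rw [← Real.tan_inv_eq_cot]
  exact inv_nonneg.mpr (Real.tan_nonneg_of_nonneg_of_le_pi_div_two hφ₀ hφ₁)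

/-- for `0 < φ ≤ π/2` and `q = cot φ ≥ 0`, the matrix `S_rot q` is
stochastic and `∂₁ ∘ S_rot q = (√(1+q²)/(1+q)) · R_φ ∘ ∂₁`. -/
theorem S_rot_stochastic_and_intertwines (φ q : ℝ)
    (hφ₀ : 0 < φ) (hφ₁ : φ ≤ Real.pi / 2) (hq : q = Real.cot φ) :
    0 ≤ q ∧ IsStochastic (S_rot q) ∧
      ∀ P : Fin 4 → ℝ,
        del1 ((S_rot q).mulVec P) =
          (Real.sqrt (1 + q ^ 2) / (1 + q)) • (Rot φ).mulVec (del1 P) := by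
  have hsin : 0 < Real.sin φ := Real.sin_pos_of_pos_of_lt_pi hφ₀ (by linarith [Real.pi_pos])
  have hcot : 0 ≤ Real.cot φ := cot_nonneg_of_nonneg_of_le_pi_div_two hφ₀.le hφ₁
  rw [hq]
  exact ⟨hcot, isStochastic_S_rot hcot, del1_S_rot_cot_mulVec hsin⟩
end

section
/- For every N ≥ 1 and every nonzero ψ ∈ ℝ^(2^N), there exists a probability vector P on the byte-4 values of N grabits such that ∂_N P = ψ/‖ψ‖₁ and, for every i ∈ {0,1}^N, the physical (marginal) probability satisfies Σ_{σ ∈ {0,1}^N} P_{(i,σ)} = |ψ_i|/‖ψ‖₁. (The refreshment conditions ψ' = d·ψ and p̃' = c·|ψ| are simultaneously satisfiable with d = c = 1/‖ψ‖₁, enforcing the Born-1 rule.) -/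
open scoped BigOperators

/-- The byte-4 index set of `N` grabits: pairs `(i, σ)` of bit strings. -/
abbrev Byte4 (N : ℕ) := (Fin N → Fin 2) × (Fin N → Fin 2)

/-- The `N`-grabit difference map `∂_N`:
`(∂_N P) i = ∑_σ (-1)^(σ₁+⋯+σ_N) P (i, σ)`. -/
noncomputable def gradMap (N : ℕ) (P : Byte4 N → ℝ) : (Fin N → Fin 2) → ℝ :=
  fun i => ∑ σ : Fin N → Fin 2, (-1 : ℝ) ^ (∑ j, (σ j : ℕ)) * P (i, σ)

/-- The ℓ¹ norm of a vector on a finite index set. -/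
noncomputable def l1norm {α : Type*} [Fintype α] (f : α → ℝ) : ℝ := ∑ a, |f a|

/-!
Put all the mass of the fibre over `i` on a single byte `(i, s i)`. The difference map then reads
off this mass times the sign `(-1) ^ (s i 1 + ⋯ + s i N)`. Since `N ≥ 1`, both signs are available,
so a mass `|φ i|` can be given the sign of `φ i`; normalising `ψ` in `ℓ¹` makes the total mass `1`.
-/

section L1Norm

variable {α : Type*} [Fintype α]

theorem l1norm_pos {f : α → ℝ} (hf : f ≠ 0) : 0 < l1norm f := by
  obtain ⟨a, ha⟩ := Function.ne_iff.mp hf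
  exact Finset.sum_pos' (fun _ _ => abs_nonneg _) ⟨a, Finset.mem_univ a, abs_pos.mpr ha⟩

theorem l1norm_smul (c : ℝ) (f : α → ℝ) : l1norm (c • f) = |c| * l1norm f := by
  simp only [l1norm, Pi.smul_apply, smul_eq_mul, abs_mul, Finset.mul_sum]

theorem l1norm_normalize {f : α → ℝ} (hf : f ≠ 0) : l1norm ((1 / l1norm f) • f) = 1 := by
  have hpos := l1norm_pos hf
  rw [l1norm_smul, abs_of_pos (one_div_pos.mpr hpos), one_div_mul_cancel hpos.ne']

end L1Norm

section GraphWeight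

variable {ι κ R : Type*} [DecidableEq κ]

/-- The weight on `ι × κ` supported on the graph of `s`, with mass `p i` at `(i, s i)`: the lift of
`p` to `ι × κ` that has marginal `p` and at most one atom in each fibre. -/
def graphWeight [Zero R] (s : ι → κ) (p : ι → R) (b : ι × κ) : R :=
  if b.2 = s b.1 then p b.1 else 0

theorem graphWeight_nonneg [Zero R] [Preorder R] {s : ι → κ} {p : ι → R} (hp : ∀ i, 0 ≤ p i)
    (b : ι × κ) : 0 ≤ graphWeight s p b :=
  ite_nonneg (hp b.1) le_rfl

theorem sum_mul_graphWeight [Fintype κ] [NonUnitalNonAssocSemiring R] (c : κ → R) (s : ι → κ)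
    (p : ι → R) (i : ι) : ∑ k, c k * graphWeight s p (i, k) = c (s i) * p i := by
  simp only [graphWeight, mul_ite, mul_zero, Finset.sum_ite_eq', Finset.mem_univ, if_true]

theorem sum_graphWeight [Fintype κ] [AddCommMonoid R] (s : ι → κ) (p : ι → R) (i : ι) :
    ∑ k, graphWeight s p (i, k) = p i := by
  simp only [graphWeight, Finset.sum_ite_eq', Finset.mem_univ, if_true]

end GraphWeight

theorem gradMap_graphWeight {N : ℕ} (s : (Fin N → Fin 2) → Fin N → Fin 2)
    (p : (Fin N → Fin 2) → ℝ) :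
    gradMap N (graphWeight s p) = fun i => (-1) ^ (∑ j, (s i j : ℕ)) * p i :=
  funext fun i => sum_mul_graphWeight _ s p i

theorem exists_neg_one_pow_sum_mul_abs_eq {J R : Type*} [Fintype J] [Nonempty J] [Ring R]
    [LinearOrder R] [IsOrderedAddMonoid R] (x : R) :
    ∃ σ : J → Fin 2, (-1 : R) ^ (∑ j, (σ j : ℕ)) * |x| = x := by
  classical
  rcases le_total 0 x with hx | hx
  · exact ⟨0, by simp [abs_of_nonneg hx]⟩
  · obtain ⟨j₀⟩ := ‹Nonempty J›
    have one_bit : ∑ j, ((Pi.single j₀ 1 : J → Fin 2) j : ℕ) = 1 := by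
      simp [Pi.single_apply, apply_ite Fin.val]
    exact ⟨Pi.single j₀ 1, by rw [one_bit, pow_one, neg_one_mul, abs_of_nonpos hx, neg_neg]⟩

theorem exists_nonneg_gradMap_eq {N : ℕ} (hN : 1 ≤ N) (φ : (Fin N → Fin 2) → ℝ) :
    ∃ P : Byte4 N → ℝ, (∀ b, 0 ≤ P b) ∧ gradMap N P = φ ∧ ∀ i, ∑ σ, P (i, σ) = |φ i| := by
  have : Nonempty (Fin N) := ⟨⟨0, hN⟩⟩
  choose s hs using fun i => exists_neg_one_pow_sum_mul_abs_eq (J := Fin N) (φ i)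
  exact ⟨graphWeight s fun i => |φ i|, graphWeight_nonneg fun _ => abs_nonneg _,
    (gradMap_graphWeight s _).trans (funext hs), sum_graphWeight s _⟩

/-- for every nonzero `ψ ∈ ℝ^(2^N)` there is a probability vector `P` on
byte-4 values with `∂_N P = ψ/‖ψ‖₁` whose physical marginals obey the Born-1 rule
`∑_σ P (i,σ) = |ψ_i|/‖ψ‖₁`. -/
theorem exists_refreshed_representation (N : ℕ) (hN : 1 ≤ N)
    (ψ : (Fin N → Fin 2) → ℝ) (hψ : ψ ≠ 0) :
    ∃ P : Byte4 N → ℝ,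
      (∀ b, 0 ≤ P b) ∧ (∑ b, P b = 1) ∧
      gradMap N P = (1 / l1norm ψ) • ψ ∧
      ∀ i : Fin N → Fin 2,
        ∑ σ : Fin N → Fin 2, P (i, σ) = |ψ i| / l1norm ψ := by
  obtain ⟨P, hP_nonneg, hP_grad, hP_marginal⟩ :=
    exists_nonneg_gradMap_eq hN ((1 / l1norm ψ) • ψ)
  refine ⟨P, hP_nonneg, ?_, hP_grad, fun i => ?_⟩
  · calc
      ∑ b, P b = ∑ i, ∑ σ, P (i, σ) := Fintype.sum_prod_type _
      _ = l1norm ((1 / l1norm ψ) • ψ) := Finset.sum_congr rfl fun i _ => hP_marginal i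
      _ = 1 := l1norm_normalize hψ
  · rw [hP_marginal, Pi.smul_apply, smul_eq_mul, one_div_mul_eq_div, abs_div,
      abs_of_pos (l1norm_pos hψ)]
end
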